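/- arXiv:1201.0697 — 3 statements merged into one kernel-verified Lean document; each statement's English description precedes it below -/
import Mathlib

section
/- For every finite subset W of the vertices of the infinite hexagonal grid G∞, the number of outgoing edges satisfies |ℰ(W)| ≥ √6 · √|W|. -/
/-- Adjacency of the infinite hexagonal grid `G∞` in brick-wall coordinates on `ℤ × ℤ`:
`(x,y)` and `(x',y')` are adjacent iff `y' = y` and `|x' - x| = 1`, or
`x' = x` and `|y' - y| = 1` and `x + min y y'` is even. -/
def hexAdj (v w : ℤ × ℤ) : Prop :=
  (v.2 = w.2 ∧ (v.1 - w.1).natAbs = 1) ∨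
  (v.1 = w.1 ∧ (v.2 - w.2).natAbs = 1 ∧ Even (v.1 + min v.2 w.2))

/-- The neighborhood `𝒩(W)`: vertices not in `W` adjacent to some vertex of `W`. -/
def hexNbhd (W : Set (ℤ × ℤ)) : Set (ℤ × ℤ) :=
  {v | v ∉ W ∧ ∃ w ∈ W, hexAdj v w}

/-- The boundary `ℬ(W)`: vertices of `W` adjacent to some vertex not in `W`. -/
def hexBdry (W : Set (ℤ × ℤ)) : Set (ℤ × ℤ) :=
  {v | v ∈ W ∧ ∃ w, w ∉ W ∧ hexAdj v w}

/-- The outgoing edges `ℰ(W)`, encoded as ordered pairs `(v, w)` with `v ∈ W`, `w ∉ W`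
and `v` adjacent to `w`; each edge with exactly one endpoint in `W` corresponds to
exactly one such pair. -/
def hexCutEdges (W : Set (ℤ × ℤ)) : Set ((ℤ × ℤ) × (ℤ × ℤ)) :=
  {p | p.1 ∈ W ∧ p.2 ∉ W ∧ hexAdj p.1 p.2}

/-- The hexagonal cell `C(a,b)`, with vertex set `{(2a+b+i, b+j) : i ∈ {0,1,2}, j ∈ {0,1}}`. -/
def hexCell (a b : ℤ) : Set (ℤ × ℤ) :=
  {(2*a+b, b), (2*a+b+1, b), (2*a+b+2, b),
   (2*a+b, b+1), (2*a+b+1, b+1), (2*a+b+2, b+1)}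

/-- The vertex set `V(G_r)` of the finite hexagonal grid of radius `r`: the union of the
cells `C(a,b)` with `(|a| + |b| + |a+b|)/2 ≤ r - 1`. -/
def gridVerts (r : ℕ) : Set (ℤ × ℤ) :=
  {v | ∃ a b : ℤ, a.natAbs + b.natAbs + (a+b).natAbs ≤ 2*(r-1) ∧ v ∈ hexCell a b}

/-- `𝒩_{G_r}(W)`: vertices of `V(G_r) \ W` adjacent to some vertex of `W`. -/
def hexNbhdIn (r : ℕ) (W : Set (ℤ × ℤ)) : Set (ℤ × ℤ) :=
  {v | v ∈ gridVerts r ∧ v ∉ W ∧ ∃ w ∈ W, hexAdj v w}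

/-- `ℬ_{G_r}(W)`: vertices of `W` adjacent to some vertex of `V(G_r) \ W`. -/
def hexBdryIn (r : ℕ) (W : Set (ℤ × ℤ)) : Set (ℤ × ℤ) :=
  {v | v ∈ W ∧ ∃ w, w ∈ gridVerts r ∧ w ∉ W ∧ hexAdj v w}

/-- `ℰ_{G_r}(W)`: the edges of `G_r` with exactly one endpoint in `W ⊆ V(G_r)`, encoded
as ordered pairs `(v, w)` with `v ∈ W`, `w ∈ V(G_r) \ W`, `v` adjacent to `w`. -/
def hexCutEdgesIn (r : ℕ) (W : Set (ℤ × ℤ)) : Set ((ℤ × ℤ) × (ℤ × ℤ)) :=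
  {p | p.1 ∈ W ∧ p.2 ∈ gridVerts r ∧ p.2 ∉ W ∧ hexAdj p.1 p.2}

/-- The index `ind_i(x,y)` of the direction-`i` row containing `(x,y)`
(directions numbered `0, 1, 2` for the paper's `1, 2, 3`):
`ind_1 = y`, `ind_2 = ⌊(y-x)/2⌋`, `ind_3 = ⌊(x+y)/2⌋`. -/
def rowInd : Fin 3 → ℤ × ℤ → ℤ
  | 0, v => v.2
  | 1, v => Int.fdiv (v.2 - v.1) 2
  | 2, v => Int.fdiv (v.1 + v.2) 2

/-- The linear parameter `p_i` along direction-`i` rows: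
`p_1 = x`, `p_2 = x + y`, `p_3 = x - y`. -/
def rowParam : Fin 3 → ℤ × ℤ → ℤ
  | 0, v => v.1
  | 1, v => v.1 + v.2
  | 2, v => v.1 - v.2

/-- A set of integers is consecutive if it contains every integer between any two of
its elements. -/
def ConsecutiveSet (S : Set ℤ) : Prop :=
  ∀ a ∈ S, ∀ b ∈ S, ∀ k : ℤ, a ≤ k → k ≤ b → k ∈ S

/-- `v` is an outermost neighbor of `W` for direction `i`: the direction-`i` row of `v`
is gray, and the parameter of `v` is `m - 1` or `M + 1`, where `m` and `M` are the
minimum and maximum of the parameter over `W` intersected with that row. -/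
def IsOutermostNeighbor (W : Set (ℤ × ℤ)) (i : Fin 3) (v : ℤ × ℤ) : Prop :=
  (rowParam i v + 1 ∈ rowParam i '' {w ∈ W | rowInd i w = rowInd i v} ∧
    ∀ q ∈ rowParam i '' {w ∈ W | rowInd i w = rowInd i v}, rowParam i v + 1 ≤ q) ∨
  (rowParam i v - 1 ∈ rowParam i '' {w ∈ W | rowInd i w = rowInd i v} ∧
    ∀ q ∈ rowParam i '' {w ∈ W | rowInd i w = rowInd i v}, q ≤ rowParam i v - 1)

/-!
Call a row *gray* if it meets `W`. The walk along a gray row leaves `W` at both ends, and every edge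
of the grid lies in rows of exactly two of the three directions, so `|ℰ(W)| ≥ p + q + r`, where
`p`, `q`, `r` are the numbers of gray rows in the three directions.

A vertex `(x, y)` is determined by its row indices `b` and `c` in the last two directions together
with the parity `ε ∈ {0, 1}` of `x + y`, and its first row index is `b + c + ε`. Hence `|W|` is at
most the number `N` of triples `(b, c, ε) ∈ B × C × {0, 1}` with `b + c + ε ∈ A`, where
`|A| = p`, `|B| = q` and `|C| = r`. When `p`, `q`, `r` satisfy the triangle inequalities,
`2 N ≤ 2 (p q + q r + r p) - (p² + q² + r²) ≤ (p + q + r)² / 3`. The first inequality is proved by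
induction: deleting the smallest element of `B` and the largest element of `C` lowers `2 N` by at
most `4 p` and the middle expression by exactly `4 p`, until `p ≥ q + r - 1`; there it follows from
the Cauchy–Davenport bound `|B + C + {0, 1}| ≥ q + r`.
-/

section SumTriples

open scoped Pointwise

variable {G : Type*}

/-- The triples `(b, c, s) ∈ B × C × S` with `b + c + s ∈ A`. Vertices of the hexagonal grid are
encoded as such triples with `S = {0, 1}`, and only `|S| = 2` matters for the bound on `|W|`. -/
def sumTriples [Add G] [DecidableEq G] (A B C S : Finset G) : Finset (G × G × G) :=
  (B ×ˢ C ×ˢ S).filter fun z => z.1 + z.2.1 + z.2.2 ∈ A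

lemma mem_sumTriples [Add G] [DecidableEq G] {A B C S : Finset G} {b c s : G} :
    (b, c, s) ∈ sumTriples A B C S ↔ (b ∈ B ∧ c ∈ C ∧ s ∈ S) ∧ b + c + s ∈ A := by
  simp only [sumTriples, Finset.mem_filter, Finset.mem_product]

lemma card_sumTriples_comm [AddCommMagma G] [DecidableEq G] (A B C S : Finset G) :
    (sumTriples A B C S).card = (sumTriples A C B S).card := by
  refine Finset.card_bij' (fun z _ => (z.2.1, z.1, z.2.2)) (fun z _ => (z.2.1, z.1, z.2.2))
    ?_ ?_ (fun _ _ => rfl) (fun _ _ => rfl) <;>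
  · rintro ⟨b, c, s⟩ hz
    rw [mem_sumTriples] at hz ⊢
    exact ⟨⟨hz.1.2.1, hz.1.1, hz.1.2.2⟩, add_comm b c ▸ hz.2⟩

lemma card_sumTriples_le_mul_summands [Add G] [DecidableEq G] (A B C S : Finset G) :
    (sumTriples A B C S).card ≤ B.card * C.card * S.card := by
  rw [mul_assoc, ← Finset.card_product, ← Finset.card_product]
  exact Finset.card_filter_le _ _

lemma card_sumTriples_le_mul_sums [Add G] [IsRightCancelAdd G] [DecidableEq G]
    (A B C S : Finset G) :
    (sumTriples A B C S).card ≤ A.card * C.card * S.card := by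
  rw [mul_assoc, ← Finset.card_product, ← Finset.card_product]
  refine Finset.card_le_card_of_injOn (fun z => (z.1 + z.2.1 + z.2.2, z.2)) ?_ ?_
  · rintro ⟨b, c, s⟩ hz
    obtain ⟨⟨-, hc, hs⟩, hA⟩ := mem_sumTriples.1 (Finset.mem_coe.1 hz)
    exact Finset.mk_mem_product hA (Finset.mk_mem_product hc hs)
  · rintro ⟨b, c, s⟩ - ⟨b', c', s'⟩ - h
    simp only [Prod.mk.injEq] at h
    obtain ⟨h, rfl, rfl⟩ := h
    rw [add_right_cancel (add_right_cancel h)]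

variable [AddCommMonoid G] [LinearOrder G] [IsOrderedCancelAddMonoid G]

lemma card_sumTriples_lt_mul_summands {A B C S : Finset G} (hB : B.Nonempty) (hC : C.Nonempty)
    (hS : S.Nonempty) (hA : A.card + 2 < B.card + C.card + S.card) :
    (sumTriples A B C S).card < B.card * C.card * S.card := by
  rw [mul_assoc, ← Finset.card_product, ← Finset.card_product]
  refine Finset.card_lt_card ((Finset.filter_ssubset).2 ?_)
  by_contra! hall
  have hsub : B + C + S ⊆ A := by
    intro a ha
    obtain ⟨_, hbc, s, hs, rfl⟩ := Finset.mem_add.1 ha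
    obtain ⟨b, hb, c, hc, rfl⟩ := Finset.mem_add.1 hbc
    exact hall (b, c, s) (Finset.mk_mem_product hb (Finset.mk_mem_product hc hs))
  have hcard := Finset.card_le_card hsub
  have hBC := cauchy_davenport_add_of_linearOrder_isCancelAdd hB hC
  have hBCS := cauchy_davenport_add_of_linearOrder_isCancelAdd (hB.add hC) hS
  omega

lemma eq_and_eq_of_add_eq_add_of_eq_min_or_eq_max {b₀ c₀ b b' c c' : G}
    (hb : b₀ ≤ b) (hb' : b₀ ≤ b') (hc : c ≤ c₀) (hc' : c' ≤ c₀)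
    (h : b = b₀ ∨ c = c₀) (h' : b' = b₀ ∨ c' = c₀) (hadd : b + c = b' + c') :
    b = b' ∧ c = c' := by
  rcases h with rfl | rfl <;> rcases h' with rfl | rfl
  · exact ⟨rfl, add_left_cancel hadd⟩
  · exact (add_eq_add_iff_eq_and_eq hb' hc).1 hadd
  · obtain ⟨hbb, hcc⟩ := (add_eq_add_iff_eq_and_eq hb hc').1 hadd.symm
    exact ⟨hbb.symm, hcc.symm⟩
  · exact ⟨add_right_cancel hadd, rfl⟩

/-- Among the deleted pairs `(b, c)`, those with `b` minimal or `c` maximal, the sum `b + c`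
determines the pair. -/
lemma card_sumTriples_le_erase_min'_erase_max' {B C : Finset G} (A S : Finset G)
    (hB : B.Nonempty) (hC : C.Nonempty) :
    (sumTriples A B C S).card ≤
      (sumTriples A (B.erase (B.min' hB)) (C.erase (C.max' hC)) S).card + A.card * S.card := by
  set b₀ := B.min' hB
  set c₀ := C.max' hC
  set T := sumTriples A (B.erase b₀) (C.erase c₀) S
  have mem_deleted : ∀ {b c s}, (b, c, s) ∈ sumTriples A B C S \ T →
      ((b ∈ B ∧ c ∈ C ∧ s ∈ S) ∧ b + c + s ∈ A) ∧ (b = b₀ ∨ c = c₀) := by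
    intro b c s hz
    simp only [T, Finset.mem_sdiff, mem_sumTriples, Finset.mem_erase] at hz
    tauto
  rw [add_comm, ← Finset.card_product]
  refine Finset.card_le_card_sdiff_add_card.trans (Nat.add_le_add_right ?_ T.card)
  refine Finset.card_le_card_of_injOn (fun z => (z.1 + z.2.1 + z.2.2, z.2.2)) ?_ ?_
  · rintro ⟨b, c, s⟩ hz
    obtain ⟨⟨⟨-, -, hs⟩, hA⟩, -⟩ := mem_deleted hz
    exact Finset.mk_mem_product hA hs
  · rintro ⟨b, c, s⟩ hz ⟨b', c', s'⟩ hz' heq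
    obtain ⟨⟨⟨hb, hc, -⟩, -⟩, h⟩ := mem_deleted hz
    obtain ⟨⟨⟨hb', hc', -⟩, -⟩, h'⟩ := mem_deleted hz'
    obtain ⟨hsum, rfl⟩ := Prod.mk.inj heq
    obtain ⟨rfl, rfl⟩ := eq_and_eq_of_add_eq_add_of_eq_min_or_eq_max (B.min'_le b hb)
      (B.min'_le b' hb') (C.le_max' c hc) (C.le_max' c' hc') h h' (add_right_cancel hsum)
    rfl

lemma two_mul_card_sumTriples_add_le_of_card_add_card_le {A B C S : Finset G}
    (hS : S.card = 2) (hA : A.card ≤ B.card + C.card) (hB : B.card ≤ A.card + C.card)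
    (hC : C.card ≤ A.card + B.card) (hBC : B.card + C.card ≤ A.card + 1) :
    2 * (sumTriples A B C S).card + (A.card ^ 2 + B.card ^ 2 + C.card ^ 2) ≤
      2 * (A.card * B.card + B.card * C.card + C.card * A.card) := by
  rcases hBC.eq_or_lt with heq | hlt
  · have hBpos : 0 < B.card := by omega
    have hCpos : 0 < C.card := by omega
    have h := card_sumTriples_lt_mul_summands (A := A) (Finset.card_pos.1 hBpos)
      (Finset.card_pos.1 hCpos) (Finset.card_pos.1 (hS ▸ zero_lt_two)) (by omega)
    rw [hS] at h
    have hAeq : (A.card : ℤ) = B.card + C.card - 1 := by omega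
    zify at h ⊢
    rw [hAeq]
    linarith
  · have h := card_sumTriples_le_mul_summands A B C S
    rw [hS] at h
    have hAeq : A.card = B.card + C.card := by omega
    rw [hAeq]
    linarith

lemma two_mul_card_sumTriples_add_le {S : Finset G} (hS : S.card = 2) (A B C : Finset G)
    (hA : A.card ≤ B.card + C.card) (hB : B.card ≤ A.card + C.card)
    (hC : C.card ≤ A.card + B.card) :
    2 * (sumTriples A B C S).card + (A.card ^ 2 + B.card ^ 2 + C.card ^ 2) ≤
      2 * (A.card * B.card + B.card * C.card + C.card * A.card) := by
  induction hn : B.card generalizing B C with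
  | zero =>
    rw [← hn]
    exact two_mul_card_sumTriples_add_le_of_card_add_card_le hS hA hB hC (by omega)
  | succ n ih =>
    rw [← hn]
    rcases le_or_gt (B.card + C.card) (A.card + 1) with hBC | hBC
    · exact two_mul_card_sumTriples_add_le_of_card_add_card_le hS hA hB hC hBC
    have hBne : B.Nonempty := Finset.card_pos.1 (by omega)
    have hCne : C.Nonempty := Finset.card_pos.1 (by omega)
    have hstep := card_sumTriples_le_erase_min'_erase_max' A S hBne hCne
    have hB' := Finset.card_erase_add_one (B.min'_mem hBne)
    have hC' := Finset.card_erase_add_one (C.max'_mem hCne)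
    set B' := B.erase (B.min' hBne)
    set C' := C.erase (C.max' hCne)
    have hind := ih B' C' (by omega) (by omega) (by omega) (by omega)
    rw [hS] at hstep
    rw [show n = B'.card by omega] at hind
    rw [← hB', ← hC']
    linarith

theorem six_mul_card_sumTriples_le {S : Finset G} (hS : S.card = 2) (A B C : Finset G) :
    6 * (sumTriples A B C S).card ≤ (A.card + B.card + C.card) ^ 2 := by
  wlog hCB : C.card ≤ B.card generalizing B C
  · rw [card_sumTriples_comm, add_right_comm]
    exact this C B (le_of_not_ge hCB)
  rcases le_total (B.card + C.card) A.card with hA | hA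
  · have h := card_sumTriples_le_mul_summands A B C S
    rw [hS] at h
    nlinarith [Nat.pow_le_pow_left hA 2, sq_nonneg ((B.card : ℤ) - C.card)]
  rcases le_total (A.card + C.card) B.card with hB | hB
  · have h := card_sumTriples_le_mul_sums A B C S
    rw [hS] at h
    nlinarith [Nat.pow_le_pow_left hB 2, sq_nonneg ((A.card : ℤ) - C.card)]
  have h := two_mul_card_sumTriples_add_le hS A B C hA hB (by omega)
  zify at h ⊢
  nlinarith [sq_nonneg ((A.card : ℤ) - B.card), sq_nonneg ((B.card : ℤ) - C.card),
    sq_nonneg ((C.card : ℤ) - A.card)]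

end SumTriples

/-- The last point of each fiber of `ind` over `W` has its successor outside `W`. -/
lemma card_image_le_card_of_forall_exists_lt {V ι P : Type*} [DecidableEq ι] [LinearOrder P]
    (W : Finset V) (E : Finset (V × V)) (ind : V → ι) (par : V → P)
    (hE : ∀ v ∈ W, ∃ w, ind w = ind v ∧ par v < par w ∧ (w ∉ W → (v, w) ∈ E)) :
    (W.image ind).card ≤ E.card := by
  classical
  refine (Finset.card_le_card fun k hk => ?_).trans
    (Finset.card_image_le (s := E) (f := fun e => ind e.1))
  obtain ⟨u, hu, rfl⟩ := Finset.mem_image.1 hk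
  obtain ⟨v, hv, hmax⟩ := (W.filter fun v => ind v = ind u).exists_max_image par
    ⟨u, Finset.mem_filter.2 ⟨hu, rfl⟩⟩
  obtain ⟨hvW, hvu⟩ := Finset.mem_filter.1 hv
  obtain ⟨w, hwv, hlt, hvw⟩ := hE v hvW
  have hwW : w ∉ W := fun hw =>
    hlt.not_ge (hmax w (Finset.mem_filter.2 ⟨hw, hwv.trans hvu⟩))
  exact Finset.mem_image.2 ⟨(v, w), hvw hwW, hvu⟩

section HexGrid

lemma rowInd_zero (v : ℤ × ℤ) : rowInd 0 v = v.2 := rfl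

lemma rowInd_one (v : ℤ × ℤ) : rowInd 1 v = (v.2 - v.1) / 2 :=
  Int.fdiv_eq_ediv_of_nonneg _ zero_le_two

lemma rowInd_two (v : ℤ × ℤ) : rowInd 2 v = (v.1 + v.2) / 2 :=
  Int.fdiv_eq_ediv_of_nonneg _ zero_le_two

lemma hexAdj_iff {v w : ℤ × ℤ} :
    hexAdj v w ↔ w = (v.1 + 1, v.2) ∨ w = (v.1 - 1, v.2) ∨
      ((v.1 + v.2) % 2 = 0 ∧ w = (v.1, v.2 + 1)) ∨ ((v.1 + v.2) % 2 = 1 ∧ w = (v.1, v.2 - 1)) := by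
  obtain ⟨x, y⟩ := v
  obtain ⟨x', y'⟩ := w
  simp only [hexAdj, Int.even_iff, Prod.mk.injEq]
  omega

lemma exists_hexAdj_rowParam_eq_add_one (i : Fin 3) (v : ℤ × ℤ) :
    ∃ w, hexAdj v w ∧ rowInd i w = rowInd i v ∧ rowParam i w = rowParam i v + 1 := by
  have hparity := Int.emod_two_eq_zero_or_one (v.1 + v.2)
  match i with
  | 0 => exact ⟨(v.1 + 1, v.2), hexAdj_iff.2 (.inl rfl), rfl, rfl⟩
  | 1 =>
    rcases hparity with h | h
    · refine ⟨(v.1, v.2 + 1), hexAdj_iff.2 (.inr (.inr (.inl ⟨h, rfl⟩))), ?_, ?_⟩ <;>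
        simp only [rowInd_one, rowParam] <;> omega
    · refine ⟨(v.1 + 1, v.2), hexAdj_iff.2 (.inl rfl), ?_, ?_⟩ <;>
        simp only [rowInd_one, rowParam] <;> omega
  | 2 =>
    rcases hparity with h | h
    · refine ⟨(v.1 + 1, v.2), hexAdj_iff.2 (.inl rfl), ?_, ?_⟩ <;>
        simp only [rowInd_two, rowParam] <;> omega
    · refine ⟨(v.1, v.2 - 1), hexAdj_iff.2 (.inr (.inr (.inr ⟨h, rfl⟩))), ?_, ?_⟩ <;>
        simp only [rowInd_two, rowParam] <;> omega

lemma exists_hexAdj_rowParam_eq_sub_one (i : Fin 3) (v : ℤ × ℤ) :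
    ∃ w, hexAdj v w ∧ rowInd i w = rowInd i v ∧ rowParam i w = rowParam i v - 1 := by
  have hparity := Int.emod_two_eq_zero_or_one (v.1 + v.2)
  match i with
  | 0 => exact ⟨(v.1 - 1, v.2), hexAdj_iff.2 (.inr (.inl rfl)), rfl, rfl⟩
  | 1 =>
    rcases hparity with h | h
    · refine ⟨(v.1 - 1, v.2), hexAdj_iff.2 (.inr (.inl rfl)), ?_, ?_⟩ <;>
        simp only [rowInd_one, rowParam] <;> omega
    · refine ⟨(v.1, v.2 - 1), hexAdj_iff.2 (.inr (.inr (.inr ⟨h, rfl⟩))), ?_, ?_⟩ <;>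
        simp only [rowInd_one, rowParam] <;> omega
  | 2 =>
    rcases hparity with h | h
    · refine ⟨(v.1, v.2 + 1), hexAdj_iff.2 (.inr (.inr (.inl ⟨h, rfl⟩))), ?_, ?_⟩ <;>
        simp only [rowInd_two, rowParam] <;> omega
    · refine ⟨(v.1 - 1, v.2), hexAdj_iff.2 (.inr (.inl rfl)), ?_, ?_⟩ <;>
        simp only [rowInd_two, rowParam] <;> omega

lemma card_filter_rowInd_eq_of_hexAdj {v w : ℤ × ℤ} (h : hexAdj v w) :
    (Finset.univ.filter fun i => rowInd i v = rowInd i w).card = 2 := by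
  rw [Finset.card_filter, Fin.sum_univ_three]
  have hv := And.intro (rowInd_zero v) (And.intro (rowInd_one v) (rowInd_two v))
  have hw := And.intro (rowInd_zero w) (And.intro (rowInd_one w) (rowInd_two w))
  simp only [hexAdj, Int.even_iff] at h
  split_ifs <;> omega

lemma finite_hexCutEdges {W : Set (ℤ × ℤ)} (hW : W.Finite) : (hexCutEdges W).Finite := by
  have hnbrs : ∀ v, {w | hexAdj v w}.Finite := fun v => by
    refine (Set.toFinite {(v.1 + 1, v.2), (v.1 - 1, v.2), (v.1, v.2 + 1), (v.1, v.2 - 1)}).subset ?_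
    intro w hw
    rcases hexAdj_iff.1 hw with rfl | rfl | ⟨-, rfl⟩ | ⟨-, rfl⟩ <;> simp
  refine (hW.biUnion fun v _ => (hnbrs v).image (Prod.mk v)).subset ?_
  rintro ⟨v, w⟩ ⟨hv, -, hvw⟩
  exact Set.mem_biUnion hv ⟨w, hvw, rfl⟩

lemma two_mul_card_image_rowInd_le {W : Finset (ℤ × ℤ)} {E : Finset ((ℤ × ℤ) × (ℤ × ℤ))}
    (hE : (E : Set ((ℤ × ℤ) × (ℤ × ℤ))) = hexCutEdges W) (i : Fin 3) :
    2 * (W.image (rowInd i)).card ≤ (E.filter fun e => rowInd i e.1 = rowInd i e.2).card := by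
  have mem_cut : ∀ {v w}, v ∈ W → hexAdj v w → w ∉ W → (v, w) ∈ E := fun hv hvw hw =>
    Finset.mem_coe.1 (hE ▸ ⟨hv, hw, hvw⟩)
  set F := E.filter fun e => rowInd i e.1 = rowInd i e.2
  rw [two_mul, ← Finset.card_filter_add_card_filter_not (s := F)
    fun e => rowParam i e.1 < rowParam i e.2]
  refine add_le_add
    (card_image_le_card_of_forall_exists_lt W _ _ (rowParam i) fun v hv => ?_)
    (card_image_le_card_of_forall_exists_lt W _ _ (OrderDual.toDual ∘ rowParam i) fun v hv => ?_)
  · obtain ⟨w, hvw, hind, hpar⟩ := exists_hexAdj_rowParam_eq_add_one i v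
    have hlt : rowParam i v < rowParam i w := by omega
    exact ⟨w, hind, hlt, fun hw =>
      Finset.mem_filter.2 ⟨Finset.mem_filter.2 ⟨mem_cut hv hvw hw, hind.symm⟩, hlt⟩⟩
  · obtain ⟨w, hvw, hind, hpar⟩ := exists_hexAdj_rowParam_eq_sub_one i v
    have hlt : rowParam i w < rowParam i v := by omega
    exact ⟨w, hind, hlt, fun hw =>
      Finset.mem_filter.2 ⟨Finset.mem_filter.2 ⟨mem_cut hv hvw hw, hind.symm⟩, hlt.not_gt⟩⟩

lemma sum_card_image_rowInd_le_ncard_hexCutEdges (W : Finset (ℤ × ℤ)) :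
    ∑ i, (W.image (rowInd i)).card ≤ (hexCutEdges (W : Set (ℤ × ℤ))).ncard := by
  obtain ⟨E, hE⟩ := (finite_hexCutEdges W.finite_toSet).exists_finset_coe
  rw [← hE, Set.ncard_coe_finset]
  refine Nat.le_of_mul_le_mul_left ?_ zero_lt_two
  calc 2 * ∑ i, (W.image (rowInd i)).card
      ≤ ∑ i, (E.filter fun e => rowInd i e.1 = rowInd i e.2).card := by
        rw [Finset.mul_sum]
        exact Finset.sum_le_sum fun i _ => two_mul_card_image_rowInd_le hE i
    _ = ∑ e ∈ E, (Finset.univ.filter fun i => rowInd i e.1 = rowInd i e.2).card :=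
        Finset.sum_card_bipartiteAbove_eq_sum_card_bipartiteBelow
          fun (i : Fin 3) (e : (ℤ × ℤ) × (ℤ × ℤ)) => rowInd i e.1 = rowInd i e.2
    _ = ∑ _e ∈ E, 2 := Finset.sum_congr rfl fun e he =>
        card_filter_rowInd_eq_of_hexAdj (hE.subset (Finset.mem_coe.2 he)).2.2
    _ = 2 * E.card := by rw [Finset.sum_const, smul_eq_mul, mul_comm]

lemma rowInd_one_add_rowInd_two_add_emod_two (v : ℤ × ℤ) :
    rowInd 1 v + rowInd 2 v + (v.1 + v.2) % 2 = rowInd 0 v := by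
  rw [rowInd_zero, rowInd_one, rowInd_two]
  omega

lemma card_le_card_sumTriples_image_rowInd (W : Finset (ℤ × ℤ)) :
    W.card ≤ (sumTriples (W.image (rowInd 0)) (W.image (rowInd 1)) (W.image (rowInd 2))
      {0, 1}).card := by
  refine Finset.card_le_card_of_injOn
    (fun v => (rowInd 1 v, rowInd 2 v, (v.1 + v.2) % 2)) (fun v hv => ?_) ?_
  · refine Finset.mem_coe.2 (mem_sumTriples.2 ⟨⟨Finset.mem_image_of_mem _ hv,
      Finset.mem_image_of_mem _ hv, ?_⟩, ?_⟩)
    · simpa using Int.emod_two_eq_zero_or_one (v.1 + v.2)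
    · exact rowInd_one_add_rowInd_two_add_emod_two v ▸ Finset.mem_image_of_mem _ hv
  · rintro ⟨x, y⟩ - ⟨x', y'⟩ - h
    simp only [rowInd_one, rowInd_two, Prod.mk.injEq] at h ⊢
    omega

end HexGrid

/-- For every finite subset `W` of the vertices of the infinite hexagonal grid,
`|ℰ(W)| ≥ √6 · √|W|`. -/
theorem infinite_hex_edge_isoperimetric (W : Set (ℤ × ℤ)) (hW : W.Finite) :
    Real.sqrt 6 * Real.sqrt W.ncard ≤ ((hexCutEdges W).ncard : ℝ) := by
  lift W to Finset (ℤ × ℤ) using hW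
  rw [Set.ncard_coe_finset, ← Real.sqrt_mul (by norm_num)]
  refine Real.sqrt_le_iff.2 ⟨by positivity, ?_⟩
  have h : 6 * W.card ≤ (hexCutEdges (W : Set (ℤ × ℤ))).ncard ^ 2 :=
    calc 6 * W.card
        ≤ 6 * (sumTriples (W.image (rowInd 0)) (W.image (rowInd 1)) (W.image (rowInd 2))
            {0, 1}).card := Nat.mul_le_mul_left 6 (card_le_card_sumTriples_image_rowInd W)
      _ ≤ (∑ i, (W.image (rowInd i)).card) ^ 2 := by
        rw [Fin.sum_univ_three]
        exact six_mul_card_sumTriples_le (by simp) _ _ _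
      _ ≤ (hexCutEdges (W : Set (ℤ × ℤ))).ncard ^ 2 :=
        Nat.pow_le_pow_left (sum_card_image_rowInd_le_ncard_hexCutEdges W) 2
  exact_mod_cast h
end

section
/- The constant √6 is optimal in the edge-isoperimetric inequality on the infinite hexagonal grid: if c is a real number such that |ℰ(W)| ≥ c · √|W| holds for every finite nonempty subset W of the vertices of G∞, then c ≤ √6. -/
/-!
The three neighbors of a vertex `v` of a hexagonal cell `W` are two vertices of `W` and one vertex
outside, so `e ↦ e.1` is injective on `ℰ(W)` and `|ℰ(W)| ≤ |W| = 6`. Tested on `W`, the inequality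
`c √|W| ≤ |ℰ(W)|` therefore gives `c √6 ≤ 6`.
-/

theorem ncard_hexCutEdges_le_ncard {W : Set (ℤ × ℤ)} (hW : W.Finite)
    (hout : ∀ v ∈ W, {w | w ∉ W ∧ hexAdj v w}.Subsingleton) :
    (hexCutEdges W).ncard ≤ W.ncard := by
  refine Set.ncard_le_ncard_of_injOn Prod.fst (fun e he ↦ he.1) ?_ hW
  rintro ⟨v, w⟩ ⟨hv, hw⟩ ⟨_, w'⟩ ⟨-, hw'⟩ rfl
  exact Prod.ext rfl (hout v hv hw hw')

theorem hexCell_eq_Icc_prod_Icc (a b : ℤ) :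
    hexCell a b = Set.Icc (2 * a + b) (2 * a + b + 2) ×ˢ Set.Icc b (b + 1) := by
  ext ⟨x, y⟩
  simp only [hexCell, Set.mem_insert_iff, Set.mem_singleton_iff, Prod.mk.injEq, Set.mem_prod,
    Set.mem_Icc]
  omega

theorem finite_hexCell (a b : ℤ) : (hexCell a b).Finite := by
  rw [hexCell_eq_Icc_prod_Icc]
  exact (Set.finite_Icc _ _).prod (Set.finite_Icc _ _)

theorem ncard_hexCell (a b : ℤ) : (hexCell a b).ncard = 6 := by
  rw [hexCell_eq_Icc_prod_Icc, Set.ncard_prod, ← Finset.coe_Icc, ← Finset.coe_Icc,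
    Set.ncard_coe_finset, Set.ncard_coe_finset, Int.card_Icc, Int.card_Icc,
    show 2 * a + b + 2 + 1 - (2 * a + b) = 3 by ring, show b + 1 + 1 - b = 2 by ring]
  rfl

theorem subsingleton_hexAdj_notMem_hexCell {a b : ℤ} {v : ℤ × ℤ} (hv : v ∈ hexCell a b) :
    {w | w ∉ hexCell a b ∧ hexAdj v w}.Subsingleton := by
  rintro ⟨x, y⟩ ⟨hw, hvw⟩ ⟨x', y'⟩ ⟨hw', hvw'⟩
  simp only [hexCell_eq_Icc_prod_Icc, Set.mem_prod, Set.mem_Icc] at hv hw hw'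
  simp only [hexAdj, Int.even_iff] at hvw hvw'
  rw [Prod.mk.injEq]
  omega

theorem ncard_hexCutEdges_hexCell_le (a b : ℤ) : (hexCutEdges (hexCell a b)).ncard ≤ 6 :=
  calc (hexCutEdges (hexCell a b)).ncard
      ≤ (hexCell a b).ncard := ncard_hexCutEdges_le_ncard (finite_hexCell a b)
        fun _ hv ↦ subsingleton_hexAdj_notMem_hexCell hv
    _ = 6 := ncard_hexCell a b

/-- The constant `√6` is optimal in the edge-isoperimetric inequality on the
infinite hexagonal grid. -/
theorem infinite_hex_edge_constant_optimal (c : ℝ)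
    (h : ∀ W : Set (ℤ × ℤ), W.Finite → W.Nonempty →
      c * Real.sqrt W.ncard ≤ ((hexCutEdges W).ncard : ℝ)) :
    c ≤ Real.sqrt 6 := by
  have hne : (hexCell 0 0).Nonempty := ⟨(0, 0), Set.mem_insert _ _⟩
  rw [← Real.div_sqrt, le_div_iff₀ (by positivity)]
  calc c * √6 = c * √(hexCell 0 0).ncard := by rw [ncard_hexCell, Nat.cast_ofNat]
    _ ≤ (hexCutEdges (hexCell 0 0)).ncard := h _ (finite_hexCell 0 0) hne
    _ ≤ 6 := mod_cast ncard_hexCutEdges_hexCell_le 0 0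
end

section
/- For every integer r ≥ 1, the number of edges of the infinite hexagonal grid with exactly one endpoint in V(G_r) satisfies |ℰ(V(G_r))| = 6r. -/
/-!
The three families of rows give each vertex three odd coordinates whose sum is `1` or `-1`. In these
coordinates an edge is a step by `±2` in a single coordinate, a cell is the set of vertices at sup
distance `1` from an even triple of sum `0`, and `V(G_r)` is the cube `|c i| < 2 * r`. An edge that
leaves the cube by a step `2 * s` (`s = ±1`) in coordinate `i` starts where that coordinate is
`s * (2 * r - 1)` and the sum is `-s`. The other two coordinates, multiplied by `s`, are then odd,
have sum `-2 * r` and exceed `-2 * r`, so there are `r` choices for them. The six pairs `(i, s)` are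
the six sides of `G_r`.
-/

lemma forall_fin_three_iff {P : Fin 3 → Prop} (i : Fin 3) :
    (∀ j, P j) ↔ P i ∧ P (i + 1) ∧ P (i + 2) := by
  rw [← (Equiv.addLeft i).forall_congr_right]
  simp [Fin.forall_fin_succ]

lemma sum_fin_three_eq {M : Type*} [AddCommMonoid M] (f : Fin 3 → M) (i : Fin 3) :
    ∑ j, f j = f i + f (i + 1) + f (i + 2) := by
  rw [← Equiv.sum_comp (Equiv.addLeft i), Fin.sum_univ_three]
  simp

lemma eq_add_single_fin_three_iff {M : Type*} [AddZeroClass M] {f g : Fin 3 → M} {i : Fin 3}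
    {a : M} :
    g = f + Pi.single i a ↔
      g i = f i + a ∧ g (i + 1) = f (i + 1) ∧ g (i + 2) = f (i + 2) := by
  rw [funext_iff, forall_fin_three_iff i]
  simp

/-- The row indices of a vertex, doubled and shifted so that the centre of `G_r` becomes the origin
and stays integral, with signs that make the three row directions interchangeable. -/
def hexCoord (v : ℤ × ℤ) : Fin 3 → ℤ :=
  ![2 * rowInd 0 v - 1, -2 * rowInd 1 v - 1, 1 - 2 * rowInd 2 v]

lemma hexCoord_zero (v : ℤ × ℤ) : hexCoord v 0 = 2 * v.2 - 1 := rfl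

lemma hexCoord_one (v : ℤ × ℤ) : hexCoord v 1 = -2 * ((v.2 - v.1) / 2) - 1 := by
  simp [hexCoord, rowInd, Int.fdiv_eq_ediv_of_nonneg]

lemma hexCoord_two (v : ℤ × ℤ) : hexCoord v 2 = 1 - 2 * ((v.1 + v.2) / 2) := by
  simp [hexCoord, rowInd, Int.fdiv_eq_ediv_of_nonneg]

lemma odd_hexCoord (v : ℤ × ℤ) (i : Fin 3) : Odd (hexCoord v i) := by
  revert i
  simp [forall_fin_three_iff 0, hexCoord, parity_simps]

lemma isUnit_sum_hexCoord (v : ℤ × ℤ) : IsUnit (∑ i, hexCoord v i) := by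
  rw [Int.isUnit_iff, Fin.sum_univ_three, hexCoord_zero, hexCoord_one, hexCoord_two]
  omega

lemma hexCoord_injective : Function.Injective hexCoord := by
  intro v w h
  simp only [funext_iff, forall_fin_three_iff 0, zero_add, hexCoord_zero, hexCoord_one,
    hexCoord_two] at h
  ext <;> omega

lemma exists_hexCoord_eq {c : Fin 3 → ℤ} (hodd : ∀ i, Odd (c i)) (hsum : IsUnit (∑ i, c i)) :
    ∃ v, hexCoord v = c := by
  simp only [forall_fin_three_iff 0, zero_add, Int.odd_iff] at hodd
  rw [Int.isUnit_iff, Fin.sum_univ_three] at hsum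
  refine ⟨(1 + (c 1 - c 2) / 2, (c 0 + 1) / 2), funext ?_⟩
  simp only [forall_fin_three_iff 0, zero_add, hexCoord_zero, hexCoord_one, hexCoord_two]
  omega

lemma hexAdj_of_hexCoord_eq_add_single {v w : ℤ × ℤ} {i : Fin 3} {s : ℤˣ}
    (h : hexCoord w = hexCoord v + Pi.single i (2 * (s : ℤ))) : hexAdj v w := by
  rw [eq_add_single_fin_three_iff] at h
  rw [hexAdj, Int.even_iff]
  obtain hs | hs := Int.isUnit_iff.1 s.isUnit <;> fin_cases i <;>
    simp only [Fin.zero_eta, Fin.mk_one, Fin.reduceFinMk, zero_add, Fin.reduceAdd, hexCoord_zero,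
      hexCoord_one, hexCoord_two] at h <;> omega

lemma exists_hexCoord_eq_add_single_of_hexAdj {v w : ℤ × ℤ} (h : hexAdj v w) :
    ∃ (i : Fin 3) (s : ℤˣ), hexCoord w = hexCoord v + Pi.single i (2 * (s : ℤ)) := by
  suffices ∃ i, hexCoord w = hexCoord v + Pi.single i 2 ∨
      hexCoord w = hexCoord v + Pi.single i (-2) by
    obtain ⟨i, h | h⟩ := this
    exacts [⟨i, 1, by simpa⟩, ⟨i, -1, by simpa⟩]
  rw [hexAdj, Int.even_iff] at h
  obtain ⟨hy, hx⟩ | ⟨hx, hy, heven⟩ := h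
  · obtain h₂ | h₁ : (v.1 + v.2) / 2 = (w.1 + w.2) / 2 ∨ (v.2 - v.1) / 2 = (w.2 - w.1) / 2 := by
      omega
    · refine ⟨1, ?_⟩
      simp only [eq_add_single_fin_three_iff, Fin.reduceAdd, hexCoord_zero, hexCoord_one,
        hexCoord_two]
      omega
    · refine ⟨2, ?_⟩
      simp only [eq_add_single_fin_three_iff, Fin.reduceAdd, hexCoord_zero, hexCoord_one,
        hexCoord_two]
      omega
  · refine ⟨0, ?_⟩
    simp only [eq_add_single_fin_three_iff, zero_add, hexCoord_zero, hexCoord_one, hexCoord_two]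
    omega

lemma hexAdj_iff_hexCoord {v w : ℤ × ℤ} :
    hexAdj v w ↔ ∃ (i : Fin 3) (s : ℤˣ), hexCoord w = hexCoord v + Pi.single i (2 * (s : ℤ)) :=
  ⟨exists_hexCoord_eq_add_single_of_hexAdj, fun ⟨_, _, h⟩ => hexAdj_of_hexCoord_eq_add_single h⟩

/-- The centre of the cell `C(a,b)` in the coordinates of `hexCoord`. -/
def cellCenter (a b : ℤ) : Fin 3 → ℤ :=
  ![2 * b, 2 * a, -2 * (a + b)]

lemma mem_hexCell_iff_hexCoord {a b : ℤ} {v : ℤ × ℤ} :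
    v ∈ hexCell a b ↔ ∀ i, |hexCoord v i - cellCenter a b i| ≤ 1 := by
  simp only [hexCell, Set.mem_insert_iff, Set.mem_singleton_iff, Prod.ext_iff,
    forall_fin_three_iff 0, zero_add, hexCoord_zero, hexCoord_one, hexCoord_two, cellCenter,
    Matrix.cons_val, abs_le]
  omega

lemma exists_cellCenter_eq {m : Fin 3 → ℤ} (heven : ∀ i, Even (m i)) (hsum : ∑ i, m i = 0) :
    ∃ a b, cellCenter a b = m := by
  simp only [forall_fin_three_iff 0, zero_add, Int.even_iff] at heven
  rw [Fin.sum_univ_three] at hsum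
  refine ⟨m 1 / 2, m 0 / 2, funext ?_⟩
  simp only [forall_fin_three_iff 0, zero_add, cellCenter, Matrix.cons_val]
  omega

lemma forall_abs_cellCenter_le_iff {a b n : ℤ} :
    (∀ i, |cellCenter a b i| ≤ 2 * n) ↔ |a| + |b| + |a + b| ≤ 2 * n := by
  simp only [forall_fin_three_iff 0, zero_add, cellCenter, Matrix.cons_val]
  grind

lemma exists_mem_hexCell_of_abs_hexCoord_lt {n : ℤ} {v : ℤ × ℤ} (h : ∀ i, |hexCoord v i| < 2 * n) :
    ∃ a b, v ∈ hexCell a b ∧ ∀ i, |cellCenter a b i| ≤ 2 * (n - 1) := by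
  have hodd := odd_hexCoord v
  obtain ⟨s, hs⟩ := isUnit_sum_hexCoord v
  -- The coordinate with the least multiple by `s` moves by `s` and the other two by `-s`: no
  -- coordinate leaves the range, and the sum becomes `0`.
  obtain ⟨i, hmin⟩ := Finite.exists_min fun j => s * hexCoord v j
  obtain ⟨a, b, hab⟩ : ∃ a b, cellCenter a b = fun j =>
      hexCoord v j + if j = i then (s : ℤ) else -s := by
    refine exists_cellCenter_eq (fun j => (hodd j).add_odd ?_) ?_
    · obtain rfl | rfl := Int.units_eq_one_or s <;> split_ifs <;> simp
    · rw [Finset.sum_add_distrib, ← hs, sum_fin_three_eq _ i]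
      simp
  refine ⟨a, b, mem_hexCell_iff_hexCoord.2 fun j => ?_, ?_⟩
  · rw [hab]
    obtain rfl | rfl := Int.units_eq_one_or s <;> dsimp only <;> split_ifs <;> simp
  · rw [sum_fin_three_eq _ i] at hs
    simp only [hab, forall_fin_three_iff i, ↓reduceIte, add_eq_left, one_ne_zero, Fin.reduceEq,
      abs_le, abs_lt, Int.odd_iff] at h hodd hmin ⊢
    obtain hsign | hsign := Int.isUnit_iff.1 s.isUnit <;> simp only [hsign] at * <;> omega

lemma mem_gridVerts_iff_hexCoord {r : ℕ} (hr : 1 ≤ r) {v : ℤ × ℤ} :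
    v ∈ gridVerts r ↔ ∀ i, |hexCoord v i| < 2 * r := by
  have mem_iff_cellCenter : v ∈ gridVerts r ↔
      ∃ a b, v ∈ hexCell a b ∧ ∀ i, |cellCenter a b i| ≤ 2 * ((r : ℤ) - 1) := by
    simp only [gridVerts, forall_abs_cellCenter_le_iff, Set.mem_ofPred_eq]
    zify [hr]
    simp only [and_comm]
  rw [mem_iff_cellCenter]
  refine ⟨?_, exists_mem_hexCell_of_abs_hexCoord_lt⟩
  rintro ⟨a, b, hv, hab⟩ i
  calc |hexCoord v i| ≤ |hexCoord v i - cellCenter a b i| + |cellCenter a b i| := by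
        simpa using abs_add_le (hexCoord v i - cellCenter a b i) (cellCenter a b i)
    _ ≤ 1 + 2 * ((r : ℤ) - 1) := add_le_add (mem_hexCell_iff_hexCoord.1 hv i) (hab i)
    _ < 2 * r := by omega

/-- The edges of `ℰ(W)` with a given direction: those that leave `W` by a step of `2 * s` in the
`i`-th coordinate of `hexCoord`. -/
def dirCutEdges (W : Set (ℤ × ℤ)) (i : Fin 3) (s : ℤˣ) : Set ((ℤ × ℤ) × (ℤ × ℤ)) :=
  {p | p.1 ∈ W ∧ p.2 ∉ W ∧ hexCoord p.2 = hexCoord p.1 + Pi.single i (2 * (s : ℤ))}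

lemma hexCutEdges_eq_iUnion_dirCutEdges (W : Set (ℤ × ℤ)) :
    hexCutEdges W = ⋃ q : Fin 3 × ℤˣ, dirCutEdges W q.1 q.2 := by
  ext p
  simp [hexCutEdges, dirCutEdges, hexAdj_iff_hexCoord]

lemma pairwise_disjoint_dirCutEdges (W : Set (ℤ × ℤ)) :
    Pairwise (Function.onFun Disjoint fun q : Fin 3 × ℤˣ => dirCutEdges W q.1 q.2) := by
  rintro ⟨i, s⟩ ⟨j, t⟩ hne
  refine Set.disjoint_left.2 fun p hp hq => hne ?_
  have h : Pi.single i (2 * (s : ℤ)) = Pi.single (M := fun _ => ℤ) j (2 * (t : ℤ)) :=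
    add_left_cancel (hp.2.2.symm.trans hq.2.2)
  obtain rfl : i = j := by
    by_contra hij
    simpa [hij] using congrFun h i
  simpa [Units.ext_iff] using h

lemma sum_hexCoord_eq_neg_of_eq_add_single {v w : ℤ × ℤ} {i : Fin 3} {s : ℤˣ}
    (h : hexCoord w = hexCoord v + Pi.single i (2 * (s : ℤ))) : ∑ j, hexCoord v j = -s := by
  have hv := Int.isUnit_iff.1 (isUnit_sum_hexCoord v)
  have hw := Int.isUnit_iff.1 (isUnit_sum_hexCoord w)
  simp only [h, Pi.add_apply, Finset.sum_add_distrib, Fintype.sum_pi_single'] at hw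
  obtain hs | hs := Int.isUnit_iff.1 s.isUnit <;> omega

lemma mem_dirCutEdges_gridVerts_iff {r : ℕ} (hr : 1 ≤ r) {i : Fin 3} {s : ℤˣ}
    {p : (ℤ × ℤ) × (ℤ × ℤ)} :
    p ∈ dirCutEdges (gridVerts r) i s ↔
      hexCoord p.1 i = s * (2 * r - 1) ∧ s * hexCoord p.1 (i + 1) < 0 ∧
        s * hexCoord p.1 (i + 2) < 0 ∧
        hexCoord p.2 = hexCoord p.1 + Pi.single i (2 * (s : ℤ)) := by
  simp only [dirCutEdges, Set.mem_ofPred_eq, mem_gridVerts_iff_hexCoord hr, ← and_assoc]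
  refine and_congr_left fun hstep => ?_
  have hsum := sum_hexCoord_eq_neg_of_eq_add_single hstep
  have hodd := Int.odd_iff.1 (odd_hexCoord p.1 i)
  obtain ⟨hi, hi₁, hi₂⟩ := eq_add_single_fin_three_iff.1 hstep
  rw [sum_fin_three_eq _ i] at hsum
  simp only [forall_fin_three_iff i, abs_lt, hi, hi₁, hi₂]
  obtain hs | hs := Int.isUnit_iff.1 s.isUnit <;> simp only [hs] at * <;> omega

lemma injOn_hexCoord_dirCutEdges_gridVerts {r : ℕ} (hr : 1 ≤ r) (i : Fin 3) (s : ℤˣ) :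
    Set.InjOn (fun p => hexCoord p.1 (i + 1)) (dirCutEdges (gridVerts r) i s) := by
  rintro ⟨v, w⟩ hp ⟨v', w'⟩ hp' (h₁ : hexCoord v (i + 1) = hexCoord v' (i + 1))
  obtain ⟨h₀, -, -, hstep⟩ := (mem_dirCutEdges_gridVerts_iff hr).1 hp
  obtain ⟨h₀', -, -, hstep'⟩ := (mem_dirCutEdges_gridVerts_iff hr).1 hp'
  have h₀ : hexCoord v i = hexCoord v' i := h₀.trans h₀'.symm
  have h₂ : hexCoord v (i + 2) = hexCoord v' (i + 2) := by
    have hsum := (sum_hexCoord_eq_neg_of_eq_add_single hstep).trans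
      (sum_hexCoord_eq_neg_of_eq_add_single hstep').symm
    rw [sum_fin_three_eq _ i, sum_fin_three_eq _ i, h₀, h₁] at hsum
    exact add_left_cancel hsum
  have hv : hexCoord v = hexCoord v' := funext <| (forall_fin_three_iff i).2 ⟨h₀, h₁, h₂⟩
  have hw : hexCoord w = hexCoord w' := hstep.trans (hv ▸ hstep'.symm)
  exact Prod.ext (hexCoord_injective hv) (hexCoord_injective hw)

lemma exists_hexCoord_add_single_eq {c : Fin 3 → ℤ} {s : ℤˣ} (hodd : ∀ j, Odd (c j))
    (hsum : ∑ j, c j = -s) (i : Fin 3) :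
    ∃ v w, hexCoord v = c ∧ hexCoord w = hexCoord v + Pi.single i (2 * (s : ℤ)) := by
  obtain ⟨v, rfl⟩ := exists_hexCoord_eq hodd (hsum ▸ (-s).isUnit)
  obtain ⟨w, hw⟩ : ∃ w, hexCoord w = hexCoord v + Pi.single i (2 * (s : ℤ)) := by
    refine exists_hexCoord_eq (fun j => (hodd j).add_even ?_) ?_
    · obtain rfl | hj := eq_or_ne j i <;> simp [*]
    · simp only [Pi.add_apply, Finset.sum_add_distrib, hsum, Fintype.sum_pi_single']
      convert s.isUnit using 1
      ring
  exact ⟨v, w, rfl, hw⟩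

lemma exists_mem_dirCutEdges_gridVerts {r k : ℕ} (hk : k < r) (i : Fin 3) (s : ℤˣ) :
    ∃ p ∈ dirCutEdges (gridVerts r) i s, hexCoord p.1 (i + 1) = -s * (2 * k + 1) := by
  obtain ⟨d, hd₀, hd₁, hd₂⟩ : ∃ d : Fin 3 → ℤ,
      d i = 2 * r - 1 ∧ d (i + 1) = -(2 * k + 1) ∧ d (i + 2) = -(2 * (r - k) - 1) :=
    ⟨fun j => (![2 * r - 1, -(2 * k + 1), -(2 * (r - k) - 1)] : Fin 3 → ℤ) (j - i), by simp⟩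
  have hodd : ∀ j, Odd (s * d j) := by
    rw [forall_fin_three_iff i, hd₀, hd₁, hd₂]
    obtain rfl | rfl := Int.units_eq_one_or s <;> simp [parity_simps]
  have hsum : ∑ j, s * d j = -s := by
    rw [sum_fin_three_eq _ i, hd₀, hd₁, hd₂]
    ring
  obtain ⟨v, w, hv, hw⟩ := exists_hexCoord_add_single_eq hodd hsum i
  have hsq (z : ℤ) : s * (s * z) = z := by rw [← mul_assoc, Int.units_coe_mul_self, one_mul]
  refine ⟨(v, w), (mem_dirCutEdges_gridVerts_iff (by omega)).2 ⟨?_, ?_, ?_, hw⟩, ?_⟩ <;>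
    simp only [hv, hsq, hd₀, hd₁, hd₂]
  · omega
  · omega
  · ring

lemma image_hexCoord_dirCutEdges_gridVerts {r : ℕ} (hr : 1 ≤ r) (i : Fin 3) (s : ℤˣ) :
    (fun p => hexCoord p.1 (i + 1)) '' dirCutEdges (gridVerts r) i s =
      (fun k : ℕ => -s * (2 * k + 1 : ℤ)) '' Set.Iio r := by
  refine Set.Subset.antisymm ?_ ?_
  · rintro _ ⟨p, hp, rfl⟩
    obtain ⟨h₀, h₁, h₂, hstep⟩ := (mem_dirCutEdges_gridVerts_iff hr).1 hp
    have hsum := sum_hexCoord_eq_neg_of_eq_add_single hstep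
    rw [sum_fin_three_eq _ i, h₀] at hsum
    obtain ⟨m, hm⟩ := odd_hexCoord p.1 (i + 1)
    simp only [Set.mem_image, Set.mem_Iio, hm] at *
    obtain hs | hs := Int.isUnit_iff.1 s.isUnit <;> simp only [hs] at *
    · exact ⟨(-m - 1).toNat, by omega, by omega⟩
    · exact ⟨m.toNat, by omega, by omega⟩
  · rintro _ ⟨k, hk, rfl⟩
    exact exists_mem_dirCutEdges_gridVerts hk i s

lemma ncard_dirCutEdges_gridVerts {r : ℕ} (hr : 1 ≤ r) (i : Fin 3) (s : ℤˣ) :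
    (dirCutEdges (gridVerts r) i s).ncard = r := by
  have hinj : Function.Injective fun k : ℕ => -s * (2 * k + 1 : ℤ) := fun k l h => by
    simpa using h
  rw [← (injOn_hexCoord_dirCutEdges_gridVerts hr i s).ncard_image,
    image_hexCoord_dirCutEdges_gridVerts hr, Set.ncard_image_of_injective _ hinj]
  simp

/-- For every `r ≥ 1`, `|ℰ(V(G_r))| = 6r`. -/
theorem card_cutEdges_gridVerts (r : ℕ) (hr : 1 ≤ r) :
    (hexCutEdges (gridVerts r)).ncard = 6*r := by
  have hcard (q : Fin 3 × ℤˣ) := ncard_dirCutEdges_gridVerts hr q.1 q.2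
  rw [hexCutEdges_eq_iUnion_dirCutEdges, Set.ncard_iUnion_of_finite
    (fun q => Set.finite_of_ncard_pos (by rw [hcard]; exact hr))
    (pairwise_disjoint_dirCutEdges _)]
  simp [hcard, finsum_eq_sum_of_fintype]
end
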